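/- Let (J₁, B₁) be a pseudo-euclidean Jordan algebra over a field K of characteristic zero, J₂ a Jordan algebra over K, and π : J₂ → End(J₁) an admissible representation such that each π(x) is B₁-symmetric (B₁(π(x)y, y') = B₁(y, π(x)y') for all y, y'). Define the symmetric bilinear map φ : J₁ × J₁ → J₂* by φ(y, y')(x) = B₁(π(x)y, y'). Then the vector space J̃ = J₂ ⊕ J₁ ⊕ J₂* endowed with the product (x + y + f)(x' + y' + f') = xx' + yy' + π(x)y' + π(x')y + f'∘R_x + f∘R_{x'} + φ(y, y') (for x, x' ∈ J₂, y, y' ∈ J₁, f, f' ∈ J₂*, where R_x denotes multiplication by x in J₂) is a Jordan algebra; moreover, for every symmetric associative bilinear form γ on J₂, the bilinear form B_γ(x + y + f, x' + y' + f') = γ(x, x') + B₁(y, y') + f(x') + f'(x) is an associative scalar product on J̃. -/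

import Mathlib

variable {K : Type*} [Field K] [CharZero K]
variable {J₁ : Type*} [NonUnitalNonAssocCommRing J₁] [Module K J₁]
  [SMulCommClass K J₁ J₁] [IsScalarTower K J₁ J₁] [FiniteDimensional K J₁]
variable {J₂ : Type*} [NonUnitalNonAssocCommRing J₂] [Module K J₂]
  [SMulCommClass K J₂ J₂] [IsScalarTower K J₂ J₂] [FiniteDimensional K J₂]

/-- The map `φ : J₁ × J₁ → J₂*`, `φ(y, y')(x) = B₁(π(x)y, y')`. -/
def phiMap (B₁ : J₁ →ₗ[K] J₁ →ₗ[K] K) (π : J₂ →ₗ[K] Module.End K J₁)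
    (y y' : J₁) : Module.Dual K J₂ where
  toFun x := B₁ (π x y) y'
  map_add' a b := by simp
  map_smul' c a := by simp

/-- The double extension product on `J₂ ⊕ J₁ ⊕ J₂*`:
`(x + y + f)(x' + y' + f') = xx' + (yy' + π(x)y' + π(x')y) + (f'∘R_x + f∘R_{x'} + φ(y, y'))`. -/
noncomputable def deMul (B₁ : J₁ →ₗ[K] J₁ →ₗ[K] K) (π : J₂ →ₗ[K] Module.End K J₁)
    (p q : J₂ × J₁ × Module.Dual K J₂) : J₂ × J₁ × Module.Dual K J₂ :=
  (p.1 * q.1,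
    p.2.1 * q.2.1 + π p.1 q.2.1 + π q.1 p.2.1,
    q.2.2.comp (LinearMap.mulLeft K p.1) + p.2.2.comp (LinearMap.mulLeft K q.1) +
      phiMap B₁ π p.2.1 q.2.1)

/-- The bilinear form `B_γ(x+y+f, x'+y'+f') = γ(x,x') + B₁(y,y') + f(x') + f'(x)`. -/
noncomputable def deForm (B₁ : J₁ →ₗ[K] J₁ →ₗ[K] K) (γ : J₂ →ₗ[K] J₂ →ₗ[K] K)
    (p q : J₂ × J₁ × Module.Dual K J₂) : K :=
  γ p.1 q.1 + B₁ p.2.1 q.2.1 + p.2.2 q.1 + q.2.2 p.1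

/-!
Modulo `J₂*` the algebra `J̃` is the semidirect product `J₂ ⊕ J₁`, and admissibility makes that a
Jordan algebra. The `J₂*`-component is controlled by the associative form `B_γ` with `γ = 0`: for
fixed `p` the two sides of the Jordan identity, as operators in `q`, are adjoint to each other, so
their difference is skew, and its `J₂*`-component vanishes for all `q` as soon as the identity
holds for `q ∈ J₂`. For such `q = x'` the `J₂*`-component, evaluated at `z ∈ J₂`, splits into three
parts, according to how `p = x + y + f` enters. The part linear in `f` and the part quadratic in `y`
vanish by symmetries of the linearised identities of `J₂` and `π`. For the part cubic in `y`, the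
commutator `D = [π(x'), π(z)]` is skew and satisfies `D(y²) = 2y·D(y)`, whence
`B₁(y, D(y²)) = -2B₁(y, D(y²))`, which forces `B₁(y, D(y²)) = 0`.
-/

theorem isSMulRegular_ofNat {K : Type*} [Field K] (V : Type*) [AddCommGroup V] [Module K V]
    (n : ℕ) [n.AtLeastTwo] [NeZero (OfNat.ofNat n : K)] :
    IsSMulRegular V (OfNat.ofNat n : ℕ) := fun v w h =>
  smul_right_injective V (NeZero.ne (OfNat.ofNat n : K)) <| by
    simpa only [ofNat_smul_eq_nsmul] using h

section JordanRing

variable {A : Type*} [NonUnitalNonAssocCommRing A] [IsCommJordan A]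

theorem jordan_linearized (h2 : IsSMulRegular A 2) (a b c d : A) :
    a * (b * c * d) + b * (c * a * d) + c * (a * b * d) =
      b * c * (a * d) + c * a * (b * d) + a * b * (c * d) := by
  apply h2
  have h := DFunLike.congr_fun (two_nsmul_lie_lmul_lmul_add_add_eq_zero a b c) d
  simp only [Ring.lie_def] at h
  change 2 • (a * (b * c * d) - b * c * (a * d) + (b * (c * a * d) - c * a * (b * d)) +
    (c * (a * b * d) - a * b * (c * d))) = 0 at h
  linear_combination (norm := module) h

-- The right-hand side of `jordan_linearized` is symmetric in its four variables.
theorem jordan_linearized_swap (h2 : IsSMulRegular A 2) (a b c d : A) :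
    a * (b * c * d) + b * (c * a * d) + c * (a * b * d) =
      a * (b * d * c) + b * (d * a * c) + d * (a * b * c) := by
  rw [jordan_linearized h2 a b c d, jordan_linearized h2 a b d c, mul_comm c d,
    mul_comm (b * c), mul_comm (c * a), mul_comm a d, mul_comm c a]
  abel

theorem jordan_linearized_swap_self (h2 : IsSMulRegular A 2) (a b c : A) :
    2 • (a * (a * b * c)) + b * (a * a * c) = 2 • (a * (b * (a * c))) + b * (a * a) * c := by
  have h := jordan_linearized_swap h2 a a b c
  rw [mul_comm b a, mul_comm c a, mul_comm (a * c), mul_comm c, mul_comm (a * a) b] at h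
  linear_combination (norm := module) h

end JordanRing

section Representation

variable {R J M A : Type*} [CommRing R]
  [NonUnitalNonAssocCommRing J] [Module R J] [AddCommGroup M] [Module R M]
  [NonUnitalNonAssocCommRing A] [Module R A]

/-- A representation of the Jordan algebra `J` on the module `M`: the conditions on `π` that make
`J ⊕ M`, with `M` squaring to zero, a Jordan algebra. -/
structure IsJordanRep (π : J →ₗ[R] Module.End R M) : Prop where
  map_sq_comm (x : J) : π (x * x) * π x = π x * π (x * x)
  map_sq_mul (x y : J) :
    2 • (π (x * y) * π x) + π (x * x) * π y - 2 • (π x * (π y * π x)) - π ((x * x) * y) = 0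

/-- An admissible representation of the Jordan algebra `J` on the algebra `A`: the compatibility
between `π` and the product of `A` that makes the semidirect product `J ⊕ A` a Jordan algebra. -/
structure IsAdmissibleJordanRep (π : J →ₗ[R] Module.End R A) : Prop extends IsJordanRep π where
  map_sq_apply_mul (x : J) (y y' : A) :
    π (x * x) (y * y') + 2 • (π x y' * π x y) + π x y' * (y * y) + 2 • ((y * y') * π x y) =
      2 • π x (y' * π x y) + π x (y' * (y * y)) + π (x * x) y' * y + 2 • ((y' * π x y) * y)
  apply_mul_sq (x : J) (y : A) : π x y * (y * y) = π x (y * y) * y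
  map_mul_apply_sq (x x' : J) (y : A) :
    π (x * x') (y * y) + 2 • (π x' y * π x y) =
      π x (π x' (y * y)) + 2 • (π x' (π x y) * y)

/-- The product `(x + y)(x' + y') = xx' + (yy' + π(x)y' + π(x')y)` of the semidirect product
`J ⊕ A`. -/
def semidirectMul (π : J →ₗ[R] Module.End R A) (p q : J × A) : J × A :=
  (p.1 * q.1, p.2 * q.2 + π p.1 q.2 + π q.1 p.2)

theorem IsJordanRep.linearized {π : J →ₗ[R] Module.End R M} (hπ : IsJordanRep π)
    (h2 : IsSMulRegular M 2) (a b c : J) (m : M) :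
    π (a * b) (π c m) + π (c * b) (π a m) + π (a * c) (π b m) =
      π a (π b (π c m)) + π c (π b (π a m)) + π (a * c * b) m := by
  apply h2
  have h := LinearMap.congr_fun
    (congrArg₂ (· - ·) (hπ.map_sq_mul (a + c) b)
      (congrArg₂ (· + ·) (hπ.map_sq_mul a b) (hπ.map_sq_mul c b))) m
  simp only [add_mul, mul_add, map_add, mul_comm c a, Module.End.mul_apply, LinearMap.add_apply,
    LinearMap.sub_apply, LinearMap.smul_apply, LinearMap.zero_apply] at h
  linear_combination (norm := module) h

-- The left-hand side of `IsJordanRep.linearized` is symmetric in `a`, `b` and `c`.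
theorem IsJordanRep.linearized_swap {π : J →ₗ[R] Module.End R M} (hπ : IsJordanRep π)
    (h2 : IsSMulRegular M 2) (a b c : J) (m : M) :
    π a (π b (π c m)) + π c (π b (π a m)) + π (a * c * b) m =
      π a (π c (π b m)) + π b (π c (π a m)) + π (a * b * c) m := by
  rw [← hπ.linearized h2, ← hπ.linearized h2, mul_comm c b]
  abel

theorem IsAdmissibleJordanRep.commutator_apply_sq {π : J →ₗ[R] Module.End R A}
    (hπ : IsAdmissibleJordanRep π) (x x' : J) (y : A) :
    (π x * π x' - π x' * π x) (y * y) = 2 • (y * (π x * π x' - π x' * π x) y) := by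
  have h := hπ.map_mul_apply_sq x x' y
  rw [mul_comm x x', mul_comm (π x' y)] at h
  simp only [LinearMap.sub_apply, Module.End.mul_apply, mul_comm y, sub_mul]
  linear_combination (norm := module) hπ.map_mul_apply_sq x' x y - h

theorem semidirectMul_jordan [IsCommJordan J] [IsCommJordan A] {π : J →ₗ[R] Module.End R A}
    (hπ : IsAdmissibleJordanRep π) (p q : J × A) :
    semidirectMul π (semidirectMul π p q) (semidirectMul π p p) =
      semidirectMul π p (semidirectMul π q (semidirectMul π p p)) := by
  obtain ⟨x, y⟩ := p
  obtain ⟨x', y'⟩ := q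
  refine Prod.ext (IsCommJordan.lmul_comm_rmul_rmul x x') ?_
  have hsq := LinearMap.congr_fun (hπ.map_sq_comm x) y'
  have hsq_mul := LinearMap.congr_fun (hπ.map_sq_mul x x') y
  have hsq_apply_mul := hπ.map_sq_apply_mul x y y'
  have happly_mul_sq := hπ.apply_mul_sq x' y
  have hmul_apply_sq := hπ.map_mul_apply_sq x x' y
  simp only [Module.End.mul_apply, LinearMap.add_apply, LinearMap.sub_apply, LinearMap.smul_apply,
    LinearMap.zero_apply, mul_comm (x * x) x'] at hsq hsq_mul
  simp only [mul_comm _ y] at hsq_apply_mul happly_mul_sq hmul_apply_sq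
  simp only [semidirectMul, mul_add, add_mul, map_add]
  rw [IsCommJordan.lmul_comm_rmul_rmul]
  linear_combination (norm := module)
    hsq + hsq_mul + hsq_apply_mul + happly_mul_sq + hmul_apply_sq

end Representation

section SymmetricForm

-- Both sides are values at `(q, s)` of forms that get exchanged when `q` and `s` are swapped.
theorem associativeForm_jordan_swap {A S : Type*} {mul : A → A → A} {B : A → A → S}
    (mul_comm : ∀ a b, mul a b = mul b a) (assoc : ∀ a b c, B (mul a b) c = B a (mul b c))
    {p s : A} (hs : mul (mul p s) (mul p p) = mul p (mul s (mul p p))) (q : A) :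
    B (mul (mul p q) (mul p p)) s = B (mul p (mul q (mul p p))) s :=
  calc B (mul (mul p q) (mul p p)) s
    _ = B q (mul p (mul s (mul p p))) := by rw [assoc, mul_comm p q, assoc, mul_comm s]
    _ = B q (mul (mul p s) (mul p p)) := by rw [hs]
    _ = B (mul p (mul q (mul p p))) s := by
      rw [mul_comm p (mul q _), assoc, assoc, mul_comm (mul p s)]

section Module

variable {R J M : Type*} [CommRing R] [NonUnitalNonAssocCommRing J] [Module R J]
  [AddCommGroup M] [Module R M] {B : M →ₗ[R] M →ₗ[R] R}

theorem isSkewAdjoint_commutator {f g : Module.End R M} (hf : B.IsSelfAdjoint f)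
    (hg : B.IsSelfAdjoint g) : B.IsSkewAdjoint ⇑(f * g - g * f) := by
  have h := (LinearMap.IsAdjointPair.mul hf hg).sub (LinearMap.IsAdjointPair.mul hg hf)
  have hneg : -⇑(f * g - g * f) = ⇑(g * f) - ⇑(f * g) := by
    ext x
    simp
  rwa [LinearMap.IsSkewAdjoint, hneg]

theorem IsJordanRep.form_linearized_swap {π : J →ₗ[R] Module.End R M} (hπ : IsJordanRep π)
    (h2 : IsSMulRegular M 2) (hsymm : ∀ m n, B m n = B n m) (hself : ∀ a, B.IsSelfAdjoint (π a))
    (a b c : J) (m : M) :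
    B (π (a * b * c) m) m + 2 * B (π c (π b m)) (π a m) =
      B (π (b * (a * c)) m) m + 2 * B (π c m) (π b (π a m)) := by
  have reverse (a b c : J) : B m (π a (π b (π c m))) = B m (π c (π b (π a m))) := by
    rw [← hself, ← hself, ← hself, hsymm]
  have h := congrArg (B m) (hπ.linearized_swap h2 a c b m)
  simp only [map_add, reverse a c b, reverse a b c] at h
  rw [hself, hself, hself, hself, hself, mul_comm b]
  linear_combination h

end Module

section Algebra

variable {R J A : Type*} [CommRing R] [NonUnitalNonAssocCommRing J] [Module R J]
  [NonUnitalNonAssocCommRing A] [Module R A] {B : A →ₗ[R] A →ₗ[R] R}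

theorem associativeForm_self_apply_sq_eq_zero (h3 : IsSMulRegular R 3)
    (hsymm : ∀ x y, B x y = B y x) (hassoc : ∀ x y z, B (x * y) z = B x (y * z))
    {D : Module.End R A} (hskew : B.IsSkewAdjoint D) (hD : ∀ y, D (y * y) = 2 • (y * D y)) (y : A) :
    B y (D (y * y)) = 0 := by
  have h : B y (D (y * y)) = 2 • -B y (D (y * y)) :=
    calc B y (D (y * y))
      _ = 2 • B (y * y) (D y) := by rw [hD, map_nsmul, hassoc]
      _ = 2 • -B y (D (y * y)) := by
        rw [hsymm y, hskew, Pi.neg_apply, map_neg, neg_neg]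
  apply h3
  linear_combination (norm := module) h

theorem IsAdmissibleJordanRep.form_apply_apply_sq_comm {π : J →ₗ[R] Module.End R A}
    (hπ : IsAdmissibleJordanRep π) (h3 : IsSMulRegular R 3) (hsymm : ∀ x y, B x y = B y x)
    (hassoc : ∀ x y z, B (x * y) z = B x (y * z)) (hself : ∀ a, B.IsSelfAdjoint (π a))
    (a b : J) (y : A) : B y (π a (π b (y * y))) = B y (π b (π a (y * y))) := by
  rw [← sub_eq_zero, ← map_sub]
  exact associativeForm_self_apply_sq_eq_zero h3 hsymm hassoc
    (isSkewAdjoint_commutator (hself a) (hself b)) (hπ.commutator_apply_sq a b) y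

end Algebra

end SymmetricForm

section DoubleExtension

variable {K : Type*} [Field K] {J₁ : Type*} [NonUnitalNonAssocCommRing J₁] [Module K J₁]
  {J₂ : Type*} [NonUnitalNonAssocCommRing J₂] [Module K J₂]
  {B₁ : J₁ →ₗ[K] J₁ →ₗ[K] K} {π : J₂ →ₗ[K] Module.End K J₁}

theorem deMul_apply_dual [SMulCommClass K J₂ J₂] (p q : J₂ × J₁ × Module.Dual K J₂) (z : J₂) :
    (deMul B₁ π p q).2.2 z = q.2.2 (p.1 * z) + p.2.2 (q.1 * z) + B₁ (π z p.2.1) q.2.1 :=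
  rfl

theorem deMul_comm [SMulCommClass K J₂ J₂] (hsymm : ∀ x y, B₁ x y = B₁ y x)
    (hself : ∀ x, B₁.IsSelfAdjoint (π x)) (p q : J₂ × J₁ × Module.Dual K J₂) :
    deMul B₁ π p q = deMul B₁ π q p := by
  refine Prod.ext (mul_comm _ _) (Prod.ext ?_ (LinearMap.ext fun z => ?_))
  · simp only [deMul, mul_comm q.2.1]
    abel
  · rw [deMul_apply_dual, deMul_apply_dual, hself, hsymm p.2.1]
    ring

theorem deForm_comm (hsymm : ∀ x y, B₁ x y = B₁ y x) {γ : J₂ →ₗ[K] J₂ →ₗ[K] K}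
    (hγ : ∀ x y, γ x y = γ y x) (p q : J₂ × J₁ × Module.Dual K J₂) :
    deForm B₁ γ p q = deForm B₁ γ q p := by
  simp only [deForm]
  rw [hγ, hsymm]
  ring

theorem eq_zero_of_forall_deForm_eq_zero (hnondeg : B₁.SeparatingLeft) {γ : J₂ →ₗ[K] J₂ →ₗ[K] K}
    {p : J₂ × J₁ × Module.Dual K J₂} (hp : ∀ q, deForm B₁ γ p q = 0) : p = 0 := by
  obtain ⟨x, y, f⟩ := p
  have hx : x = 0 := (Module.forall_dual_apply_eq_zero_iff K x).1 fun g => by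
    simpa [deForm] using hp (0, 0, g)
  have hy : y = 0 := hnondeg y fun y' => by simpa [deForm] using hp (0, y', 0)
  have hf : f = 0 := LinearMap.ext fun z => by simpa [deForm, hx] using hp (z, 0, 0)
  rw [hx, hy, hf, Prod.mk_zero_zero, Prod.mk_zero_zero]

theorem deForm_deMul_left [SMulCommClass K J₂ J₂]
    (hassoc : ∀ x y z, B₁ (x * y) z = B₁ x (y * z)) (hself : ∀ x, B₁.IsSelfAdjoint (π x))
    {γ : J₂ →ₗ[K] J₂ →ₗ[K] K} (hγ : ∀ x y z, γ (x * y) z = γ x (y * z))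
    (p q s : J₂ × J₁ × Module.Dual K J₂) :
    deForm B₁ γ (deMul B₁ π p q) s = deForm B₁ γ p (deMul B₁ π q s) := by
  obtain ⟨x, y, f⟩ := p
  obtain ⟨x', y', f'⟩ := q
  obtain ⟨z, w, g⟩ := s
  simp only [deForm, deMul_apply_dual]
  simp only [deMul, map_add, LinearMap.add_apply, hγ, hassoc, mul_comm x' x, mul_comm z x]
  rw [hself z y y', hself x' y w, hself x y' w]
  ring

section JordanIdentity

variable [SMulCommClass K J₂ J₂] [IsCommJordan J₁] [IsCommJordan J₂]

theorem deMul_jordan_of_dual (hπ : IsAdmissibleJordanRep π) {p q : J₂ × J₁ × Module.Dual K J₂}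
    (hdual : ∀ z, (deMul B₁ π (deMul B₁ π p q) (deMul B₁ π p p)).2.2 z =
      (deMul B₁ π p (deMul B₁ π q (deMul B₁ π p p))).2.2 z) :
    deMul B₁ π (deMul B₁ π p q) (deMul B₁ π p p) =
      deMul B₁ π p (deMul B₁ π q (deMul B₁ π p p)) := by
  have hsemidirect := semidirectMul_jordan hπ (p.1, p.2.1) (q.1, q.2.1)
  have hfst := congrArg Prod.fst hsemidirect
  have hsnd := congrArg Prod.snd hsemidirect
  exact Prod.ext hfst (Prod.ext hsnd (LinearMap.ext hdual))

theorem deMul_jordan_inl [NeZero (2 : K)] [NeZero (3 : K)] (hsymm : ∀ x y, B₁ x y = B₁ y x)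
    (hassoc : ∀ x y z, B₁ (x * y) z = B₁ x (y * z)) (hπ : IsAdmissibleJordanRep π)
    (hself : ∀ x, B₁.IsSelfAdjoint (π x)) (p : J₂ × J₁ × Module.Dual K J₂) (x' : J₂) :
    deMul B₁ π (deMul B₁ π p (x', 0, 0)) (deMul B₁ π p p) =
      deMul B₁ π p (deMul B₁ π (x', 0, 0) (deMul B₁ π p p)) := by
  obtain ⟨x, y, f⟩ := p
  refine deMul_jordan_of_dual hπ fun z => ?_
  have hlinear := congrArg f
    (jordan_linearized_swap_self (isSMulRegular_ofNat (K := K) J₂ 2) x x' z)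
  have hquadratic := hπ.form_linearized_swap (isSMulRegular_ofNat (K := K) J₁ 2) hsymm hself
    x x' z y
  have hcubic := hπ.form_apply_apply_sq_comm (isSMulRegular_ofNat (K := K) K 3) hsymm hassoc hself
    x' z y
  rw [← hself x', ← hself z, ← hself z] at hcubic
  simp only [map_add, map_nsmul] at hlinear
  simp only [deMul_apply_dual]
  simp only [deMul, map_add, map_zero, mul_zero, zero_mul, LinearMap.zero_apply, add_zero,
    zero_add]
  linear_combination hlinear + hquadratic + hcubic

theorem deMul_jordan [NeZero (2 : K)] [NeZero (3 : K)] (hsymm : ∀ x y, B₁ x y = B₁ y x)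
    (hassoc : ∀ x y z, B₁ (x * y) z = B₁ x (y * z)) (hπ : IsAdmissibleJordanRep π)
    (hself : ∀ x, B₁.IsSelfAdjoint (π x)) (p q : J₂ × J₁ × Module.Dual K J₂) :
    deMul B₁ π (deMul B₁ π p q) (deMul B₁ π p p) =
      deMul B₁ π p (deMul B₁ π q (deMul B₁ π p p)) := by
  refine deMul_jordan_of_dual hπ fun z => ?_
  have hz := associativeForm_jordan_swap (B := deForm B₁ 0) (deMul_comm hsymm hself)
    (deForm_deMul_left hassoc hself fun _ _ _ => rfl)
    (deMul_jordan_inl hsymm hassoc hπ hself p z) q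
  simpa only [deForm, LinearMap.zero_apply, map_zero, zero_add, add_zero] using hz

end JordanIdentity

theorem double_extension_jordan_general [NeZero (2 : K)] [NeZero (3 : K)] [SMulCommClass K J₂ J₂]
    [IsCommJordan J₁] [IsCommJordan J₂] (hsymm : ∀ x y, B₁ x y = B₁ y x)
    (hnondeg : B₁.SeparatingLeft) (hassoc : ∀ x y z, B₁ (x * y) z = B₁ x (y * z))
    (hπ : IsAdmissibleJordanRep π) (hself : ∀ x, B₁.IsSelfAdjoint (π x)) :
    ((∀ p q : J₂ × J₁ × Module.Dual K J₂, deMul B₁ π p q = deMul B₁ π q p) ∧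
      (∀ p q : J₂ × J₁ × Module.Dual K J₂,
        deMul B₁ π (deMul B₁ π p q) (deMul B₁ π p p) =
          deMul B₁ π p (deMul B₁ π q (deMul B₁ π p p)))) ∧
    (∀ γ : J₂ →ₗ[K] J₂ →ₗ[K] K,
      (∀ x y : J₂, γ x y = γ y x) → (∀ x y z : J₂, γ (x * y) z = γ x (y * z)) →
      ((∀ p q : J₂ × J₁ × Module.Dual K J₂, deForm B₁ γ p q = deForm B₁ γ q p) ∧
        (∀ p : J₂ × J₁ × Module.Dual K J₂, (∀ q, deForm B₁ γ p q = 0) → p = 0) ∧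
        (∀ p q s : J₂ × J₁ × Module.Dual K J₂,
          deForm B₁ γ (deMul B₁ π p q) s = deForm B₁ γ p (deMul B₁ π q s)))) :=
  ⟨⟨deMul_comm hsymm hself, deMul_jordan hsymm hassoc hπ hself⟩, fun _ hγ hγa =>
    ⟨deForm_comm hsymm hγ, fun _ => eq_zero_of_forall_deForm_eq_zero hnondeg,
      deForm_deMul_left hassoc hself hγa⟩⟩

end DoubleExtension

/-- double extension: if `(J₁, B₁)` is pseudo-euclidean, `J₂` is a Jordan
algebra and `π : J₂ → End(J₁)` is an admissible representation by `B₁`-symmetric operators,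
then `J₂ ⊕ J₁ ⊕ J₂*` with the product `deMul` is a Jordan algebra, and for every symmetric
associative bilinear form `γ` on `J₂` the form `B_γ` is an associative scalar product. -/
theorem double_extension_jordan
    (hjordan₁ : ∀ x y : J₁, (x * y) * (x * x) = x * (y * (x * x)))
    (hjordan₂ : ∀ x y : J₂, (x * y) * (x * x) = x * (y * (x * x)))
    (B₁ : J₁ →ₗ[K] J₁ →ₗ[K] K)
    (hsymm : ∀ x y : J₁, B₁ x y = B₁ y x)
    (hnondeg : ∀ x : J₁, (∀ y : J₁, B₁ x y = 0) → x = 0)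
    (hassoc : ∀ x y z : J₁, B₁ (x * y) z = B₁ x (y * z))
    (π : J₂ →ₗ[K] Module.End K J₁)
    -- `π` is a representation
    (hrep1 : ∀ x : J₂, π (x * x) * π x = π x * π (x * x))
    (hrep2 : ∀ x y : J₂,
      2 • (π (x * y) * π x) + π (x * x) * π y - 2 • (π x * (π y * π x)) -
          π ((x * x) * y) = 0)
    -- `π` is admissible
    (hadm1 : ∀ (x : J₂) (y y' : J₁),
      π (x * x) (y * y') + 2 • (π x y' * π x y) + π x y' * (y * y) +
          2 • ((y * y') * π x y) =
        2 • π x (y' * π x y) + π x (y' * (y * y)) + π (x * x) y' * y +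
          2 • ((y' * π x y) * y))
    (hadm2 : ∀ (x : J₂) (y : J₁), π x y * (y * y) = π x (y * y) * y)
    (hadm3 : ∀ (x x' : J₂) (y : J₁),
      π (x * x') (y * y) + 2 • (π x' y * π x y) =
        π x (π x' (y * y)) + 2 • (π x' (π x y) * y))
    -- each `π x` is `B₁`-symmetric
    (hπsymm : ∀ (x : J₂) (y y' : J₁), B₁ (π x y) y' = B₁ y (π x y')) :
    -- the product makes `J₂ ⊕ J₁ ⊕ J₂*` a Jordan algebra
    ((∀ p q : J₂ × J₁ × Module.Dual K J₂, deMul B₁ π p q = deMul B₁ π q p) ∧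
      (∀ p q : J₂ × J₁ × Module.Dual K J₂,
        deMul B₁ π (deMul B₁ π p q) (deMul B₁ π p p) =
          deMul B₁ π p (deMul B₁ π q (deMul B₁ π p p)))) ∧
    -- for every symmetric associative `γ` on `J₂`, `B_γ` is an associative scalar product
    (∀ γ : J₂ →ₗ[K] J₂ →ₗ[K] K,
      (∀ x y : J₂, γ x y = γ y x) → (∀ x y z : J₂, γ (x * y) z = γ x (y * z)) →
      ((∀ p q : J₂ × J₁ × Module.Dual K J₂, deForm B₁ γ p q = deForm B₁ γ q p) ∧
        (∀ p : J₂ × J₁ × Module.Dual K J₂, (∀ q, deForm B₁ γ p q = 0) → p = 0) ∧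
        (∀ p q s : J₂ × J₁ × Module.Dual K J₂,
          deForm B₁ γ (deMul B₁ π p q) s = deForm B₁ γ p (deMul B₁ π q s)))) := by
  have : IsCommJordan J₁ := ⟨hjordan₁⟩
  have : IsCommJordan J₂ := ⟨hjordan₂⟩
  exact double_extension_jordan_general hsymm hnondeg hassoc
    ⟨⟨hrep1, hrep2⟩, hadm1, hadm2, hadm3⟩ hπsymm
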